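/- Let R = K[x_1,...,x_n] and S = R/I for a squarefree monomial ideal I. Define W_k = {p ∈ Spec(R) : p ⊇ I, 𝒜^{S_p} is k-generated fails}, equivalently via Proposition: p lies in the complement of W_k iff (I^{[p^e]} : I)R_p = L_e R_p for all e > k. Then the minimal elements of W (the non-finitely-generated locus) with respect to inclusion are face ideals (ideals generated by subsets of the variables), and consequently W = V(J) where J is the intersection of the finitely many minimal face ideals in W; in particular W is Zariski closed. -/

import Mathlib

open MvPolynomial

def frobPow {R : Type*} [CommRing R] (J : Ideal R) (q : ℕ) : Ideal R :=
  Ideal.span ((fun f => f ^ q) '' (J : Set R))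

def chainProd {R : Type*} [CommRing R] (I : Ideal R) (p : ℕ) : ℕ → List ℕ → Ideal R
  | _, [] => ⊤
  | c, a :: rest => frobPow ((frobPow I (p ^ a)).colon I) (p ^ c) * chainProd I p (c + a) rest

/-- `L_e = Σ_{a₁+⋯+a_s = e, 1 ≤ aᵢ ≤ e-1} (I^{[p^{a₁}]}:I)·(I^{[p^{a₂}]}:I)^{[p^{a₁}]}⋯`. -/
def Le {R : Type*} [CommRing R] (I : Ideal R) (p e : ℕ) : Ideal R :=
  ⨆ l ∈ {l : List ℕ | l.sum = e ∧ ∀ a ∈ l, 1 ≤ a ∧ a ≤ e - 1}, chainProd I p 0 l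

noncomputable def faceIdeal (K : Type*) [Field K] {n : ℕ} (F : Finset (Fin n)) :
    Ideal (MvPolynomial (Fin n) K) :=
  Ideal.span ((fun i : Fin n => (X i : MvPolynomial (Fin n) K)) '' {i | i ∉ F})

/-- The algebra `𝒜^{S_q}` is finitely generated (equivalently, some `k`-generation holds):
`(I^{[p^e]} : I) R_q = L_e R_q` for all `e > k`, for some `k`. -/
def fgAt {R : Type*} [CommRing R] (p : ℕ) (I : Ideal R) (q : Ideal R) [q.IsPrime] : Prop :=
  ∃ k : ℕ, ∀ e > k,
    ((frobPow I (p ^ e)).colon I).map (algebraMap R (Localization.AtPrime q)) =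
      (Le I p e).map (algebraMap R (Localization.AtPrime q))

/-!
An element outside a prime `q'` has a term whose monomial lies outside `q'`, and for a
monomial ideal `B` that monomial carries a given monomial into `B` whenever the element does. So an
inclusion of monomial ideals localized at `q'` is witnessed by monomials, and it persists at every
prime `q` whose variables all lie in `q'`. The ideals `I^{[p^e]} : I` and `L_e` are monomial, hence
membership of `q` in the non-finitely-generated locus depends only, and monotonically, on the set of
variables in `q`; there are finitely many such sets.
-/

section MonomialIdeal

variable {σ K : Type*} [CommSemiring K] {A B : Ideal (MvPolynomial σ K)}

/-- A monomial ideal of `K[σ]`, that is, one generated by (monic) monomials. It is used for `I` and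
for the ideals `I^{[p^e]} : I` and `L_e` derived from it. -/
def IsMonomialIdeal (A : Ideal (MvPolynomial σ K)) : Prop :=
  ∃ s : Set (σ →₀ ℕ), A = Ideal.span ((fun d => monomial d (1 : K)) '' s)

theorem mem_of_forall_monomial_mem {f : MvPolynomial σ K}
    (h : ∀ d ∈ f.support, monomial d (1 : K) ∈ A) : f ∈ A := by
  rw [f.as_sum]
  refine A.sum_mem fun d hd => ?_
  simpa only [C_mul_monomial, mul_one] using A.mul_mem_left (C (f.coeff d)) (h d hd)

theorem IsMonomialIdeal.monomial_mem (hA : IsMonomialIdeal A) {f : MvPolynomial σ K}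
    (hf : f ∈ A) {d : σ →₀ ℕ} (hd : d ∈ f.support) : monomial d (1 : K) ∈ A := by
  obtain ⟨s, rfl⟩ := hA
  obtain ⟨c, hc, hcd⟩ := mem_ideal_span_monomial_image.1 hf d hd
  refine mem_ideal_span_monomial_image.2 fun e he => ⟨c, hc, ?_⟩
  rwa [Finset.mem_singleton.1 (support_monomial_subset he)]

theorem isMonomialIdeal_of_forall_monomial_mem
    (h : ∀ f ∈ A, ∀ d ∈ f.support, monomial d (1 : K) ∈ A) : IsMonomialIdeal A := by
  refine ⟨{d | monomial d (1 : K) ∈ A}, le_antisymm (fun f hf => ?_) (Ideal.span_le.2 ?_)⟩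
  · exact mem_of_forall_monomial_mem fun d hd => Ideal.subset_span ⟨d, h f hf d hd, rfl⟩
  · exact Set.image_subset_iff.2 fun d hd => hd

theorem IsMonomialIdeal.monomial_mul_mem (hA : IsMonomialIdeal A) {f : MvPolynomial σ K}
    {e : σ →₀ ℕ} (hf : f * monomial e 1 ∈ A) {d : σ →₀ ℕ} (hd : d ∈ f.support) :
    monomial d 1 * monomial e 1 ∈ A := by
  have hde : d + e ∈ (f * monomial e 1).support := by
    rwa [mem_support_iff, coeff_mul_monomial, mul_one, ← mem_support_iff]
  simpa only [monomial_mul, mul_one] using hA.monomial_mem hf hde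

theorem isMonomialIdeal_top : IsMonomialIdeal (⊤ : Ideal (MvPolynomial σ K)) :=
  isMonomialIdeal_of_forall_monomial_mem fun _ _ _ _ => Submodule.mem_top

theorem isMonomialIdeal_span_prod_X (𝒢 : Set (Finset σ)) :
    IsMonomialIdeal (Ideal.span
      ((fun G : Finset σ => ∏ i ∈ G, (X i : MvPolynomial σ K)) '' 𝒢)) := by
  refine ⟨(fun G : Finset σ => ∑ i ∈ G, Finsupp.single i 1) '' 𝒢, ?_⟩
  simp only [Set.image_image, monomial_sum_one, X]

theorem IsMonomialIdeal.mul (hA : IsMonomialIdeal A) (hB : IsMonomialIdeal B) :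
    IsMonomialIdeal (A * B) := by
  obtain ⟨s, rfl⟩ := hA
  obtain ⟨t, rfl⟩ := hB
  refine ⟨Set.image2 (· + ·) s t, ?_⟩
  rw [Ideal.span_mul_span', ← Set.image2_mul, Set.image2_image_left, Set.image2_image_right,
    Set.image_image2]
  simp only [monomial_mul, mul_one]

theorem IsMonomialIdeal.iSup {ι : Sort*} {A : ι → Ideal (MvPolynomial σ K)}
    (h : ∀ i, IsMonomialIdeal (A i)) : IsMonomialIdeal (⨆ i, A i) := by
  choose s hs using h
  refine ⟨⋃ i, s i, ?_⟩
  rw [Set.image_iUnion, Ideal.span_iUnion]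
  exact iSup_congr hs

theorem IsMonomialIdeal.colon (hA : IsMonomialIdeal A) (hB : IsMonomialIdeal B) :
    IsMonomialIdeal (A.colon (B : Set (MvPolynomial σ K))) := by
  obtain ⟨t, rfl⟩ := hB
  rw [Ideal.colon_span]
  refine isMonomialIdeal_of_forall_monomial_mem fun f hf d hd => Submodule.mem_colon.2 ?_
  rintro _ ⟨e, he, rfl⟩
  exact hA.monomial_mul_mem (Submodule.mem_colon.1 hf _ ⟨e, he, rfl⟩) hd

end MonomialIdeal

section Specialization

variable {σ K : Type*} [CommSemiring K] {A q q' : Ideal (MvPolynomial σ K)}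

theorem monomial_mem_of_forall_X_mem [hq : q.IsPrime] (h : ∀ i, X i ∈ q → X i ∈ q')
    {d : σ →₀ ℕ} (hd : monomial d (1 : K) ∈ q) : monomial d (1 : K) ∈ q' := by
  rw [monomial_eq, C_1, one_mul, Finsupp.prod] at hd ⊢
  obtain ⟨i, hi, hid⟩ := hq.prod_mem_iff.1 hd
  have hiq' : X i ∈ q' := h i (hq.mem_of_pow_mem _ hid)
  have hXi : X i ∣ ∏ j ∈ d.support, (X j : MvPolynomial σ K) ^ d j :=
    (dvd_pow_self _ (Finsupp.mem_support_iff.1 hi)).trans (Finset.dvd_prod_of_mem _ hi)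
  exact q'.mem_of_dvd hXi hiq'

theorem IsMonomialIdeal.le_of_forall_X_mem [q.IsPrime] (hA : IsMonomialIdeal A)
    (h : ∀ i, X i ∈ q → X i ∈ q') (hAq : A ≤ q) : A ≤ q' := fun _ hf =>
  mem_of_forall_monomial_mem fun _ hd =>
    monomial_mem_of_forall_X_mem h (hAq (hA.monomial_mem hf hd))

theorem exists_eq_zeroLocus_inf_span_X [Finite σ] {W : Set (PrimeSpectrum (MvPolynomial σ K))}
    (hW : ∀ q ∈ W, ∀ q', (∀ i, X i ∈ q.asIdeal → X i ∈ q'.asIdeal) → q' ∈ W) :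
    ∃ 𝒮 : Finset (Finset σ), W = PrimeSpectrum.zeroLocus
      ((𝒮.inf fun F => Ideal.span (X '' {i | i ∉ F}) : Ideal (MvPolynomial σ K)) : Set _) := by
  classical
  have := Fintype.ofFinite σ
  refine ⟨Finset.univ.filter fun F => ∃ q ∈ W, ∀ i, X i ∈ q.asIdeal ↔ i ∉ F, Set.ext fun q => ?_⟩
  simp only [PrimeSpectrum.mem_zeroLocus, SetLike.coe_subset_coe, q.isPrime.inf_le',
    Finset.mem_filter_univ, Ideal.span_le, Set.image_subset_iff]
  constructor
  · intro hq
    exact ⟨Finset.univ.filter fun i => X i ∉ q.asIdeal, ⟨q, hq, by simp⟩,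
      fun i hi => by simpa using hi⟩
  · rintro ⟨F, ⟨q₀, hq₀, hF⟩, hFq⟩
    exact hW q₀ hq₀ q fun i hi => hFq ((hF i).1 hi)

end Specialization

theorem frobPow_eq_map_iterateFrobenius {R : Type*} [CommRing R] (p : ℕ) [ExpChar R p]
    (J : Ideal R) (e : ℕ) : frobPow J (p ^ e) = J.map (iterateFrobenius R p e) := rfl

section Frobenius

variable {σ K : Type*} [CommRing K] {A : Ideal (MvPolynomial σ K)} (p : ℕ) [ExpChar K p]

theorem IsMonomialIdeal.frobPow (hA : IsMonomialIdeal A) (e : ℕ) :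
    IsMonomialIdeal (frobPow A (p ^ e)) := by
  obtain ⟨s, rfl⟩ := hA
  refine ⟨(fun d => p ^ e • d) '' s, ?_⟩
  rw [frobPow_eq_map_iterateFrobenius, Ideal.map_span, Set.image_image, Set.image_image]
  simp only [iterateFrobenius_def, monomial_pow, one_pow]

theorem IsMonomialIdeal.frobPow_colon (hA : IsMonomialIdeal A) (e : ℕ) :
    IsMonomialIdeal ((_root_.frobPow A (p ^ e)).colon (A : Set (MvPolynomial σ K))) :=
  (hA.frobPow p e).colon hA

theorem IsMonomialIdeal.chainProd (hA : IsMonomialIdeal A) (c : ℕ) (l : List ℕ) :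
    IsMonomialIdeal (chainProd A p c l) := by
  induction l generalizing c with
  | nil => exact isMonomialIdeal_top
  | cons a l ih => exact ((hA.frobPow_colon p a).frobPow p c).mul (ih (c + a))

theorem IsMonomialIdeal.Le (hA : IsMonomialIdeal A) (e : ℕ) : IsMonomialIdeal (Le A p e) :=
  .iSup fun l => .iSup fun _ => hA.chainProd p 0 l

end Frobenius

section Localization

variable {σ K : Type*} [CommRing K] {A B q q' : Ideal (MvPolynomial σ K)}

theorem IsMonomialIdeal.map_localization_le_of_forall_X_mem [q.IsPrime] [q'.IsPrime]
    (hA : IsMonomialIdeal A) (hB : IsMonomialIdeal B) (h : ∀ i, X i ∈ q → X i ∈ q')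
    (hle : A.map (algebraMap _ (Localization.AtPrime q')) ≤
      B.map (algebraMap _ (Localization.AtPrime q'))) :
    A.map (algebraMap _ (Localization.AtPrime q)) ≤
      B.map (algebraMap _ (Localization.AtPrime q)) := by
  obtain ⟨s, rfl⟩ := hA
  rw [Ideal.map_le_iff_le_comap, Ideal.span_le]
  rintro _ ⟨d, hd, rfl⟩
  obtain ⟨m, hmq', hmB⟩ : ∃ m ∈ q'.primeCompl, m * monomial d 1 ∈ B :=
    (IsLocalization.algebraMap_mem_map_algebraMap_iff q'.primeCompl _ _ _).1
      (hle (Ideal.mem_map_of_mem _ (Ideal.subset_span ⟨d, hd, rfl⟩)))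
  obtain ⟨e, he, he_q'⟩ : ∃ e ∈ m.support, monomial e (1 : K) ∉ q' := by
    by_contra! hall
    exact hmq' (mem_of_forall_monomial_mem hall)
  have he_q : monomial e 1 ∈ q.primeCompl := fun hmem =>
    he_q' (monomial_mem_of_forall_X_mem h hmem)
  exact (IsLocalization.algebraMap_mem_map_algebraMap_iff q.primeCompl _ _ _).2
    ⟨monomial e 1, he_q, hB.monomial_mul_mem hmB he⟩

theorem IsMonomialIdeal.fgAt_of_forall_X_mem (p : ℕ) [ExpChar K p] [q.IsPrime] [q'.IsPrime]
    (hA : IsMonomialIdeal A) (h : ∀ i, X i ∈ q → X i ∈ q') (hfg : fgAt p A q') : fgAt p A q := by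
  obtain ⟨k, hk⟩ := hfg
  refine ⟨k, fun e he => le_antisymm ?_ ?_⟩
  · exact (hA.frobPow_colon p e).map_localization_le_of_forall_X_mem (hA.Le p e) h (hk e he).le
  · exact (hA.Le p e).map_localization_le_of_forall_X_mem (hA.frobPow_colon p e) h (hk e he).ge

end Localization

/-- The locus `W` of primes `q ⊇ I` at which `𝒜^{S_q}`, `S = R/I`, is not finitely generated, as a
subset of `Spec R`. -/
def nonFGLocus {R : Type*} [CommRing R] (p : ℕ) (I : Ideal R) : Set (PrimeSpectrum R) :=
  {q | I ≤ q.asIdeal ∧ ¬ fgAt p I q.asIdeal}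

section Locus

variable {σ K : Type*} [CommRing K]

theorem IsMonomialIdeal.mem_nonFGLocus_of_forall_X_mem (p : ℕ) [ExpChar K p]
    {I : Ideal (MvPolynomial σ K)} (hI : IsMonomialIdeal I)
    {q q' : PrimeSpectrum (MvPolynomial σ K)} (hq : q ∈ nonFGLocus p I)
    (h : ∀ i, X i ∈ q.asIdeal → X i ∈ q'.asIdeal) : q' ∈ nonFGLocus p I :=
  ⟨hI.le_of_forall_X_mem h hq.1, fun hfg => hq.2 (hI.fgAt_of_forall_X_mem p h hfg)⟩

theorem stmt14_general [Finite σ] (p : ℕ) [ExpChar K p] {I : Ideal (MvPolynomial σ K)}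
    (hI : IsMonomialIdeal I) :
    ∃ 𝒮 : Finset (Finset σ), nonFGLocus p I = PrimeSpectrum.zeroLocus
      ((𝒮.inf fun F => Ideal.span (X '' {i | i ∉ F}) : Ideal (MvPolynomial σ K)) : Set _) :=
  exists_eq_zeroLocus_inf_span_X fun _ hq _ h => hI.mem_nonFGLocus_of_forall_X_mem p hq h

end Locus

/-- For a squarefree monomial ideal `I` over a field of characteristic `p`, the
non-finitely-generated locus `W = {q ⊇ I : 𝒜^{S_q} not finitely generated}` equals `V(J)`
for `J` an intersection of finitely many face ideals; in particular `W` is Zariski closed. -/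
theorem stmt14 (K : Type*) [Field K] (p : ℕ) [Fact p.Prime] [CharP K p] {n : ℕ}
    (𝒢 : Set (Finset (Fin n)))
    (I : Ideal (MvPolynomial (Fin n) K))
    (hI : I = Ideal.span ((fun G : Finset (Fin n) =>
      ∏ i ∈ G, (X i : MvPolynomial (Fin n) K)) '' 𝒢)) :
    ∃ 𝒮 : Finset (Finset (Fin n)),
      ∀ (q : Ideal (MvPolynomial (Fin n) K)) [q.IsPrime],
        ((I ≤ q ∧ ¬ fgAt p I q) ↔ 𝒮.inf (fun F => faceIdeal K F) ≤ q) := by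
  obtain ⟨𝒮, h𝒮⟩ := stmt14_general p (hI ▸ isMonomialIdeal_span_prod_X 𝒢)
  exact ⟨𝒮, fun q hq => Set.ext_iff.1 h𝒮 ⟨q, hq⟩⟩
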